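/- arXiv:2012.14401 — 2 statements merged into one kernel-verified Lean document; each statement's English description precedes it below -/
import Mathlib

section
/- Let K be a real Hilbert space and D, C bounded linear operators on K with D† = −D, ‖D‖ ≤ 1, C† = −C, C² = −1, and C D = D C. Then 1 + D² is a positive operator; set B := C ∘ √(1+D²) (positive square root) and define the operator ı on K × K (with the product real inner product) by ı(f,g) := (−D f + B g, B f + D g). Then: (i) ı ∘ ı = −id; (ii) ı is skew-adjoint, i.e. ⟨ı u, v⟩ = −⟨u, ı v⟩ for all u,v ∈ K × K; (iii) for all f,g ∈ K one has ⟨(f,0), −ı(g,0)⟩ = ⟨f, D g⟩. -/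
/-!
Everything except the positivity of `1 + D²` comes down to showing that `S` commutes with the
skew-adjoint operators `C` and `D`: then `B = C S` is skew-adjoint, commutes with `D`, and satisfies
`B² = C² S² = -(1 + D²)`, so that the identities follow by expanding the matrix of `ı`.

Both `C` and `D` commute with `S² = 1 + D²`. The continuous functional calculus of Mathlib is not
available for operators on a real Hilbert space, so the passage from `S²` to its positive square
root is done by hand (`commute_of_commute_sq`). For skew-adjoint `X` commuting with `S²`, the
commutator `Y = X S - S X` is self-adjoint and anticommutes with `S`. An operator
anticommuting with a positive operator is annihilated by it (`comp_eq_zero_of_anticommute`), so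
`S Y = 0`, hence `Y³ = 0`, and `Y = 0` by self-adjointness.
-/

open scoped RealInnerProductSpace

/-- The complex structure `ı` of the purification construction on `K × K`:
`ı(f,g) := (−D f + B g, B f + D g)`. -/
noncomputable def purificationComplexStructure {K : Type*} [NormedAddCommGroup K]
    [InnerProductSpace ℝ K] (D B : K →L[ℝ] K) : K × K → K × K :=
  fun p => (-(D p.1) + B p.2, B p.1 + D p.2)

/-- A positive operator bounded by `c` satisfies `S² ≤ c S`, as quadratic forms. -/
lemma norm_sq_apply_le_of_isPositive {K : Type*} [NormedAddCommGroup K] [InnerProductSpace ℝ K]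
    [CompleteSpace K] {S : K →L[ℝ] K} (hS : S.IsPositive) {c : ℝ} (hc : 0 < c) (hSc : ‖S‖ ≤ c)
    (x : K) : ‖S x‖ ^ 2 ≤ c * ⟪S x, x⟫ := by
  have hsym : ∀ u v : K, ⟪S u, v⟫ = ⟪u, S v⟫ := fun u v => hS.isSymmetric u v
  -- The bound comes from the quadratic form of `S` evaluated at `S x - c x`.
  have h1 : 0 ≤ ⟪S (S x - c • x), S x - c • x⟫ := hS.inner_nonneg_left _
  have h2 : ⟪S (S x), S x⟫ ≤ c * ‖S x‖ ^ 2 := by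
    calc ⟪S (S x), S x⟫ ≤ ‖S (S x)‖ * ‖S x‖ := real_inner_le_norm _ _
      _ ≤ (c * ‖S x‖) * ‖S x‖ := by
        gcongr
        exact S.le_of_opNorm_le hSc _
      _ = c * ‖S x‖ ^ 2 := by ring
  have h3 : ⟪S (S x), x⟫ = ‖S x‖ ^ 2 := by
    rw [hsym, real_inner_self_eq_norm_sq]
  simp only [map_sub, map_smul, inner_sub_left, inner_sub_right, inner_smul_left,
    inner_smul_right, conj_trivial, h3, real_inner_self_eq_norm_sq] at h1
  have h4 : 0 ≤ c * (c * ⟪S x, x⟫ - ‖S x‖ ^ 2) := by nlinarith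
  have := nonneg_of_mul_nonneg_right h4 hc
  linarith

/-- If `Y` anticommutes with the positive operator `S`, then `S Y = 0`. The operator `Z = S Y`
also anticommutes with `S`, so `(c + S) Z = Z (c - S)`; for `c ≥ ‖S‖` the factor `c - S` has norm
at most `c`, while `c + S` expands `Z x` by more than `c` unless `S Z x = 0`. Hence `S Z x` is
small where `Z` almost attains its norm, although `‖Z x‖² ≤ ‖Y‖ ‖x‖ ‖S Z x‖`. -/
lemma comp_eq_zero_of_anticommute {K : Type*} [NormedAddCommGroup K] [InnerProductSpace ℝ K]
    [CompleteSpace K] {S Y : K →L[ℝ] K} (hS : S.IsPositive)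
    (hSY : ∀ x, S (Y x) = -Y (S x)) : S ∘L Y = 0 := by
  have hsym : ∀ u v : K, ⟪S u, v⟫ = ⟪u, S v⟫ := fun u v => hS.isSymmetric u v
  set Z : K →L[ℝ] K := S ∘L Y with hZ
  have hZx : ∀ x, Z x = S (Y x) := fun x => rfl
  have hSZ : ∀ x, S (Z x) = -Z (S x) := by
    intro x
    rw [hZx, hZx, hSY x, map_neg]
  obtain ⟨c, hc, hSc⟩ : ∃ c : ℝ, 0 < c ∧ ‖S‖ ≤ c :=
    ⟨‖S‖ + 1, by positivity, by linarith⟩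
  set b : ℝ := ‖Y‖
  have hcontr : ∀ x, ‖c • x - S x‖ ^ 2 ≤ c ^ 2 * ‖x‖ ^ 2 := by
    intro x
    have h1 := norm_sq_apply_le_of_isPositive hS hc hSc x
    have h2 : 0 ≤ ‖S x‖ ^ 2 := sq_nonneg _
    rw [norm_sub_sq_real, norm_smul, inner_smul_left, real_inner_comm, conj_trivial,
      Real.norm_of_nonneg hc.le, mul_pow]
    linarith
  have hexp : ∀ v, c ^ 2 * ‖v‖ ^ 2 + ‖S v‖ ^ 2 ≤ ‖c • v + S v‖ ^ 2 := by
    intro v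
    have h1 : 0 ≤ c * ⟪S v, v⟫ := mul_nonneg hc.le (hS.inner_nonneg_left v)
    rw [norm_add_sq_real, norm_smul, inner_smul_left, real_inner_comm, conj_trivial,
      Real.norm_of_nonneg hc.le, mul_pow]
    linarith
  have hmain : ∀ x, c ^ 2 * ‖Z x‖ ^ 2 + ‖S (Z x)‖ ^ 2 ≤ ‖Z‖ ^ 2 * (c ^ 2 * ‖x‖ ^ 2) := by
    intro x
    have h1 : c • Z x + S (Z x) = Z (c • x - S x) := by
      rw [hSZ, map_sub, map_smul, sub_eq_add_neg]
    calc _ ≤ ‖c • Z x + S (Z x)‖ ^ 2 := hexp _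
      _ = ‖Z (c • x - S x)‖ ^ 2 := by rw [h1]
      _ ≤ (‖Z‖ * ‖c • x - S x‖) ^ 2 := by
        gcongr
        exact Z.le_opNorm _
      _ ≤ _ := by
        rw [mul_pow]
        gcongr
        exact hcontr x
  have hsmall : ∀ x, ‖Z x‖ ^ 2 ≤ b * ‖x‖ * ‖S (Z x)‖ := by
    intro x
    calc ‖Z x‖ ^ 2 = ⟪Y x, S (Z x)⟫ := by
          rw [← hsym, ← hZx, real_inner_self_eq_norm_sq]
      _ ≤ ‖Y x‖ * ‖S (Z x)‖ := real_inner_le_norm _ _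
      _ ≤ _ := by
        gcongr
        exact Y.le_opNorm _
  by_contra hne
  have hM : 0 < ‖Z‖ := norm_pos_iff.mpr hne
  have key : ∀ m : ℝ, 0 < m → m < ‖Z‖ → m ^ 4 ≤ b ^ 2 * (c ^ 2 * (‖Z‖ ^ 2 - m ^ 2)) := by
    intro m hm0 hm
    obtain ⟨x, hx1, hx⟩ := Z.exists_lt_apply_of_lt_opNorm hm
    have hx2 : ‖x‖ ^ 2 ≤ 1 := pow_le_one₀ (norm_nonneg _) hx1.le
    have hmx : m ^ 2 ≤ ‖Z x‖ ^ 2 := by gcongr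
    have h1 : m ^ 2 ≤ b * ‖S (Z x)‖ := by
      calc m ^ 2 ≤ b * ‖x‖ * ‖S (Z x)‖ := hmx.trans (hsmall x)
        _ ≤ b * 1 * ‖S (Z x)‖ := by gcongr
        _ = _ := by ring
    have h2 : ‖S (Z x)‖ ^ 2 ≤ c ^ 2 * (‖Z‖ ^ 2 - m ^ 2) := by
      have h3 : ‖Z‖ ^ 2 * (c ^ 2 * ‖x‖ ^ 2) ≤ ‖Z‖ ^ 2 * (c ^ 2 * 1) := by gcongr
      have h4 : c ^ 2 * m ^ 2 ≤ c ^ 2 * ‖Z x‖ ^ 2 := by gcongr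
      linarith [hmain x]
    calc m ^ 4 = (m ^ 2) ^ 2 := by ring
      _ ≤ (b * ‖S (Z x)‖) ^ 2 := by gcongr
      _ = b ^ 2 * ‖S (Z x)‖ ^ 2 := by ring
      _ ≤ _ := by gcongr
  -- Letting `m` tend to `‖Z‖` from below gives `‖Z‖ ^ 4 ≤ 0`.
  have hlim : ‖Z‖ ^ 4 ≤ b ^ 2 * (c ^ 2 * (‖Z‖ ^ 2 - ‖Z‖ ^ 2)) := by
    have hf : Continuous fun m : ℝ => m ^ 4 := by fun_prop
    have hg : Continuous fun m : ℝ => b ^ 2 * (c ^ 2 * (‖Z‖ ^ 2 - m ^ 2)) := by fun_prop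
    refine le_of_tendsto_of_tendsto (b := nhdsWithin ‖Z‖ (Set.Iio ‖Z‖))
      (hf.continuousAt.tendsto.mono_left nhdsWithin_le_nhds)
      (hg.continuousAt.tendsto.mono_left nhdsWithin_le_nhds) ?_
    filter_upwards [Ioo_mem_nhdsLT hM] with m hm using key m hm.1 hm.2
  have : 0 < ‖Z‖ ^ 4 := by positivity
  simp only [sub_self, mul_zero] at hlim
  linarith

/-- A skew-adjoint operator commuting with the square of a positive operator commutes with the
positive operator itself. -/
lemma commute_of_commute_sq {K : Type*} [NormedAddCommGroup K] [InnerProductSpace ℝ K]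
    [CompleteSpace K] {S X : K →L[ℝ] K} (hS : S.IsPositive)
    (hX : ∀ u v : K, ⟪X u, v⟫ = -⟪u, X v⟫) (hXS : ∀ x, X (S (S x)) = S (S (X x))) (x : K) :
    X (S x) = S (X x) := by
  have hsym : ∀ u v : K, ⟪S u, v⟫ = ⟪u, S v⟫ := fun u v => hS.isSymmetric u v
  set Y : K →L[ℝ] K := X ∘L S - S ∘L X with hY
  have hYx : ∀ x, Y x = X (S x) - S (X x) := fun x => rfl
  have hYsym : ∀ u v : K, ⟪Y u, v⟫ = ⟪u, Y v⟫ := by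
    intro u v
    simp only [hYx, inner_sub_left, inner_sub_right, hX, hsym]
    ring
  have hSY : ∀ x, S (Y x) = -Y (S x) := by
    intro x
    simp only [hYx, map_sub, hXS]
    abel
  have hSY0 : ∀ x, S (Y x) = 0 := fun x =>
    DFunLike.congr_fun (comp_eq_zero_of_anticommute hS hSY) x
  have hYS0 : ∀ x, Y (S x) = 0 := fun x => by
    rw [← neg_eq_zero, ← hSY, hSY0]
  have hY3 : ∀ x, Y (Y (Y x)) = 0 := by
    intro x
    rw [hYx (Y x), hSY0, map_zero, zero_sub, map_neg, hYS0, neg_zero]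
  have hY2 : ∀ x, Y (Y x) = 0 := by
    intro x
    rw [← inner_self_eq_zero (𝕜 := ℝ), hYsym, hY3, inner_zero_right]
  have hY1 : Y x = 0 := by
    rw [← inner_self_eq_zero (𝕜 := ℝ), hYsym, hY2, inner_zero_right]
  exact sub_eq_zero.mp hY1

/-- Let `D, C` be bounded operators on a real Hilbert space `K` with `D† = −D`, `‖D‖ ≤ 1`,
`C† = −C`, `C² = −1` and `CD = DC`. Then `1 + D²` is positive; with `S` its (unique) positive
square root and `B := C ∘ S`, the map `ı(f,g) := (−Df + Bg, Bf + Dg)` on `K × K` (product real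
inner product) satisfies: (i) `ı ∘ ı = −id`; (ii) `ı` is skew-adjoint; (iii)
`⟨(f,0), −ı(g,0)⟩ = ⟨f, D g⟩` for all `f, g`. -/
theorem purification_complex_structure_props
    {K : Type*} [NormedAddCommGroup K] [InnerProductSpace ℝ K] [CompleteSpace K]
    (D C : K →L[ℝ] K)
    (hD : ContinuousLinearMap.adjoint D = -D) (hDnorm : ‖D‖ ≤ 1)
    (hC : ContinuousLinearMap.adjoint C = -C) (hC2 : C ∘L C = -1)
    (hCD : C ∘L D = D ∘L C)
    (S : K →L[ℝ] K) (hSpos : S.IsPositive) (hSsq : S ∘L S = 1 + D ∘L D) :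
    (1 + D ∘L D).IsPositive ∧
    (∀ p : K × K, purificationComplexStructure D (C ∘L S)
        (purificationComplexStructure D (C ∘L S) p) = -p) ∧
    (∀ u v : K × K,
      ⟪(purificationComplexStructure D (C ∘L S) u).1, v.1⟫ +
        ⟪(purificationComplexStructure D (C ∘L S) u).2, v.2⟫ =
      -(⟪u.1, (purificationComplexStructure D (C ∘L S) v).1⟫ +
        ⟪u.2, (purificationComplexStructure D (C ∘L S) v).2⟫)) ∧
    (∀ f g : K,
      ⟪f, (-(purificationComplexStructure D (C ∘L S) (g, 0))).1⟫ +
        ⟪(0 : K), (-(purificationComplexStructure D (C ∘L S) (g, 0))).2⟫ =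
      ⟪f, D g⟫) := by
  have hDs : ∀ u v : K, ⟪D u, v⟫ = -⟪u, D v⟫ := by
    intro u v
    rw [← ContinuousLinearMap.adjoint_inner_right, hD, neg_apply,
      inner_neg_right]
  have hCs : ∀ u v : K, ⟪C u, v⟫ = -⟪u, C v⟫ := by
    intro u v
    rw [← ContinuousLinearMap.adjoint_inner_right, hC, neg_apply,
      inner_neg_right]
  have hSs : ∀ u v : K, ⟪S u, v⟫ = ⟪u, S v⟫ := fun u v => hSpos.isSymmetric u v
  have hCC : ∀ x, C (C x) = -x := fun x => DFunLike.congr_fun hC2 x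
  have hCDx : ∀ x, C (D x) = D (C x) := fun x => DFunLike.congr_fun hCD x
  have hSS : ∀ x, S (S x) = x + D (D x) := fun x => DFunLike.congr_fun hSsq x
  have hDS : ∀ x, D (S x) = S (D x) :=
    commute_of_commute_sq hSpos hDs fun x => by simp only [hSS, map_add]
  have hCS : ∀ x, C (S x) = S (C x) :=
    commute_of_commute_sq hSpos hCs fun x => by simp only [hSS, map_add, hCDx]
  refine ⟨?_, ?_, ?_, ?_⟩
  · rw [ContinuousLinearMap.isPositive_def']
    refine ⟨?_, fun x => ?_⟩
    · rw [ContinuousLinearMap.isSelfAdjoint_iff_isSymmetric]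
      intro u v
      change ⟪u + D (D u), v⟫ = ⟪u, v + D (D v)⟫
      simp only [inner_add_left, inner_add_right, hDs, neg_neg]
    · -- The quadratic form of `1 + D²` is `‖x‖² - ‖D x‖²`.
      change 0 ≤ ⟪x + D (D x), x⟫
      have h1 : ‖D x‖ ≤ ‖x‖ := by simpa using D.le_of_opNorm_le hDnorm x
      have h2 : ‖D x‖ ^ 2 ≤ ‖x‖ ^ 2 := by gcongr
      rw [inner_add_left, hDs, real_inner_self_eq_norm_sq, real_inner_self_eq_norm_sq]
      linarith
  · rintro ⟨f, g⟩
    ext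
    · simp only [purificationComplexStructure, ContinuousLinearMap.comp_apply, map_add, map_neg,
        Prod.fst_neg, ← hCS, hSS, hCC, ← hDS, hCDx]
      abel
    · simp only [purificationComplexStructure, ContinuousLinearMap.comp_apply, map_add, map_neg,
        Prod.snd_neg, ← hCS, hSS, hCC, ← hDS, hCDx]
      abel
  · rintro ⟨f, g⟩ ⟨f', g'⟩
    simp only [purificationComplexStructure, ContinuousLinearMap.comp_apply, inner_add_left,
      inner_add_right, inner_neg_left, inner_neg_right, hCs, hSs, hDs, hCS]
    ring
  · intro f g
    simp [purificationComplexStructure]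
end

section
/- Weighted L² density lemma: let s, t ∈ ℝ with s < t, and let μ be the measure on the interval (−∞, t) with density x ↦ (t − x) with respect to Lebesgue measure. Then the set {f'|_{(−∞,t)} : f ∈ C_c^∞(ℝ), supp f ⊆ (−∞,t) \ {s}} spans a dense subspace of L²((−∞,t), μ). Equivalently: if g ∈ L²((−∞,t), (t−x)dx) satisfies ∫_{−∞}^{t} (t−x) f'(x) g(x) dx = 0 for every smooth compactly supported f with supp f ⊆ (−∞,t) \ {s}, then g = 0 almost everywhere. -/
open MeasureTheory

/-!
Put `u x = (t - x) * g x`. Since `|u| ≤ (t - x) + (t - x) g²`, the function `u` is locally integrable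
on `(-∞, t)`. Orthogonality to the derivatives of test functions supported in `(-∞, s)`, respectively
in `(s, t)`, says that the distributional derivative of `u` vanishes there, so by the du Bois-Reymond
lemma (`exists_ae_eq_const_of_integral_mul_deriv_eq_zero`) `u` is almost everywhere a constant `c` on
each of the two intervals. Then `(t - x) g² = c² / (t - x)` there, and `1 / (t - x)` is integrable
neither near `-∞` nor near `t`, so both constants are zero.
-/

/-- A test function of integral zero, supported in an open interval `U`, is the derivative of a test
function supported in `U`. The primitive based at the left end `p` of an interval `[p, q] ⊆ U`
containing the support vanishes outside `[p, q]`. -/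
lemma exists_testFunction_deriv_eq {U : Set ℝ} (hU : U.OrdConnected) {ψ : ℝ → ℝ}
    (hψ : ContDiff ℝ (⊤ : ℕ∞) ψ) (hc : HasCompactSupport ψ) (hs : tsupport ψ ⊆ U)
    (h0 : ∫ x, ψ x = 0) :
    ∃ F : ℝ → ℝ, ContDiff ℝ (⊤ : ℕ∞) F ∧ HasCompactSupport F ∧ tsupport F ⊆ U ∧
      deriv F = ψ := by
  rcases (tsupport ψ).eq_empty_or_nonempty with he | hne
  · have hz : ψ = 0 := tsupport_eq_empty_iff.1 he
    refine ⟨0, contDiff_const, HasCompactSupport.zero, by simp [tsupport], ?_⟩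
    rw [hz]
    ext x
    simp
  obtain ⟨p, hp⟩ := hc.isCompact.exists_isLeast hne
  obtain ⟨q, hq⟩ := hc.isCompact.exists_isGreatest hne
  have hpqU : Set.Icc p q ⊆ U := hU.out (hs hp.1) (hs hq.1)
  have hlt : ∀ x, x < p → ψ x = 0 := fun x hx =>
    image_eq_zero_of_notMem_tsupport fun h => absurd (hp.2 h) (not_le.2 hx)
  have hgt : ∀ x, q < x → ψ x = 0 := fun x hx =>
    image_eq_zero_of_notMem_tsupport fun h => absurd (hq.2 h) (not_le.2 hx)
  have hp0 : ψ p = 0 := by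
    -- By continuity from the left, since `ψ` vanishes on `(-∞, p)`.
    have h1 : Set.EqOn ψ 0 (closure (Set.Iio p)) :=
      Set.EqOn.closure (fun x hx => hlt x hx) hψ.continuous continuous_zero
    exact h1 (by simp)
  have hd : deriv (fun x => ∫ y in p..x, ψ y) = ψ := by
    ext x
    exact hψ.continuous.deriv_integral ψ p x
  have hsupp : Function.support (fun x => ∫ y in p..x, ψ y) ⊆ Set.Icc p q := by
    intro x hx
    by_contra hn
    refine hx ?_
    rcases lt_or_ge x p with h | h
    · change ∫ y in p..x, ψ y = 0
      rw [intervalIntegral.integral_symm, intervalIntegral.integral_of_le h.le,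
        setIntegral_eq_zero_of_forall_eq_zero, neg_zero]
      intro y hy
      rcases hy.2.lt_or_eq with h' | rfl
      · exact hlt y h'
      · exact hp0
    · have hqx : q < x := not_le.1 fun h' => hn ⟨h, h'⟩
      change ∫ y in p..x, ψ y = 0
      rw [intervalIntegral.integral_eq_integral_of_support_subset, h0]
      intro y hy
      refine ⟨lt_of_not_ge fun h' => hy ?_, le_of_not_gt fun h' => hy (hgt y (hqx.trans h'))⟩
      rcases h'.lt_or_eq with h'' | rfl
      · exact hlt y h''
      · exact hp0
  refine ⟨fun x => ∫ y in p..x, ψ y, ?_, ?_, ?_, hd⟩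
  · refine contDiff_infty_iff_deriv.2 ⟨fun x => ?_, by rw [hd]; exact hψ⟩
    exact (hψ.continuous.integral_hasStrictDerivAt p x).hasDerivAt.differentiableAt
  · exact HasCompactSupport.of_support_subset_isCompact isCompact_Icc hsupp
  · exact (closure_minimal hsupp isClosed_Icc).trans hpqU

lemma integrable_mul_of_tsupport_subset {U : Set ℝ} {u φ : ℝ → ℝ}
    (hu : LocallyIntegrableOn u U) (hφ : Continuous φ) (hc : HasCompactSupport φ)
    (hs : tsupport φ ⊆ U) : Integrable (fun x => φ x * u x) := by
  have h1 : IntegrableOn (fun x => φ x * u x) (tsupport φ) :=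
    (hu.integrableOn_compact_subset hs hc.isCompact).continuousOn_mul hφ.continuousOn hc.isCompact
  refine (integrableOn_iff_integrable_of_support_subset ?_).1 h1
  exact (Function.support_mul_subset_left φ u).trans (subset_tsupport φ)

/-- The du Bois-Reymond lemma: a locally integrable function with zero distributional derivative on
an open interval is almost everywhere constant there. -/
lemma exists_ae_eq_const_of_integral_mul_deriv_eq_zero {U : Set ℝ} (hUo : IsOpen U)
    (hU : U.OrdConnected) (hne : U.Nonempty) {u : ℝ → ℝ} (hu : LocallyIntegrableOn u U)
    (h : ∀ f : ℝ → ℝ, ContDiff ℝ (⊤ : ℕ∞) f → HasCompactSupport f → tsupport f ⊆ U →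
      ∫ x, deriv f x * u x = 0) :
    ∃ c : ℝ, ∀ᵐ x, x ∈ U → u x = c := by
  obtain ⟨x₀, hx₀⟩ := hne
  obtain ⟨b, hbs, hbc, hbd, hbr, hb1⟩ :=
    exists_contDiff_tsupport_subset (n := (⊤ : ℕ∞)) (hUo.mem_nhds hx₀)
  have hbpos : 0 < ∫ x, b x :=
    hbd.continuous.integral_pos_of_hasCompactSupport_nonneg_nonzero hbc
      (fun x => (hbr ⟨x, rfl⟩).1) (x := x₀) (by simp [hb1])
  have hbint : Integrable b := hbd.continuous.integrable_of_hasCompactSupport hbc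
  have hbu := integrable_mul_of_tsupport_subset hu hbd.continuous hbc hbs
  set c : ℝ := (∫ x, b x * u x) / ∫ x, b x with hcdef
  refine ⟨c, ?_⟩
  have hloc : LocallyIntegrableOn (fun x => u x - c) U :=
    hu.sub ((locallyIntegrable_const c).locallyIntegrableOn U)
  suffices ∀ᵐ x, x ∈ U → u x - c = 0 by
    filter_upwards [this] with x hx hxU using sub_eq_zero.1 (hx hxU)
  refine hUo.ae_eq_zero_of_integral_contDiff_smul_eq_zero hloc fun φ hφ hφc hφs => ?_
  have hφint : Integrable φ := hφ.continuous.integrable_of_hasCompactSupport hφc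
  have hφu := integrable_mul_of_tsupport_subset hu hφ.continuous hφc hφs
  -- Subtracting the multiple of `b` with the same integral leaves a derivative of a test function.
  set a : ℝ := (∫ x, φ x) / ∫ x, b x with hadef
  have hts : tsupport (fun x => φ x - a * b x) ⊆ tsupport φ ∪ tsupport b := by
    refine closure_minimal (fun x hx => ?_) ((isClosed_tsupport φ).union (isClosed_tsupport b))
    by_contra hn
    rw [Set.mem_union, not_or] at hn
    refine hx ?_
    simp [image_eq_zero_of_notMem_tsupport hn.1, image_eq_zero_of_notMem_tsupport hn.2]
  obtain ⟨F, hF, hFc, hFs, hFd⟩ := exists_testFunction_deriv_eq hU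
    (ψ := fun x => φ x - a * b x) (hφ.sub (contDiff_const.mul hbd))
    ((hφc.isCompact.union hbc.isCompact).of_isClosed_subset (isClosed_tsupport _) hts)
    (hts.trans (Set.union_subset hφs hbs))
    (by
      rw [integral_sub hφint (hbint.const_mul a), integral_const_mul, hadef,
        div_mul_cancel₀ _ hbpos.ne', sub_self])
  have key := h F hF hFc hFs
  rw [hFd] at key
  have e1 : (∫ x, (φ x - a * b x) * u x) = (∫ x, φ x * u x) - a * ∫ x, b x * u x := by
    rw [← integral_const_mul, ← integral_sub hφu (hbu.const_mul a)]
    congr 1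
    ext x
    ring
  have e2 : (∫ x, φ x • (u x - c)) = (∫ x, φ x * u x) - c * ∫ x, φ x := by
    rw [← integral_const_mul, ← integral_sub hφu (hφint.const_mul c)]
    congr 1
    ext x
    simp only [smul_eq_mul]
    ring
  rw [e2, ← key, e1, hadef, hcdef]
  ring

lemma not_integrableOn_Iio_sub_inv (s t : ℝ) :
    ¬ IntegrableOn (fun x => (x - t)⁻¹) (Set.Iio s) := by
  intro h
  refine not_integrableOn_Ioi_inv (a := t - s) ?_
  have h1 : IntegrableOn (fun x : ℝ => (t - x - t)⁻¹) ((fun x => t - x) ⁻¹' Set.Iio s) :=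
    ((volume.measurePreserving_sub_left t).integrableOn_comp_preimage
      (Homeomorph.subLeft t).measurableEmbedding).2 h
  have h2 := h1.neg
  simp only [Set.preimage_const_sub_Iio] at h2
  refine h2.congr_fun (fun x _ => ?_) measurableSet_Ioi
  simp

lemma not_integrableOn_Ioo_sub_inv {s t : ℝ} (hst : s < t) :
    ¬ IntegrableOn (fun x => (x - t)⁻¹) (Set.Ioo s t) := by
  intro h
  have h1 : IntervalIntegrable (fun x => (x - t)⁻¹) volume s t :=
    (intervalIntegrable_iff_integrableOn_Ioo_of_le hst.le).2 h
  rcases intervalIntegrable_sub_inv_iff.1 h1 with h2 | h2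
  · exact hst.ne h2
  · exact h2 Set.right_mem_uIcc

/-- If `(t - x) g` is constant on `U` then `(t - x) g²` is a multiple of `1 / (t - x)` there, so a
nonzero constant would make `1 / (t - x)` integrable on `U`. -/
lemma ae_eq_zero_of_mul_ae_eq_const {U : Set ℝ} {t c : ℝ} {g : ℝ → ℝ} (hUm : MeasurableSet U)
    (hUt : U ⊆ Set.Iio t) (hn : ¬ IntegrableOn (fun x => (x - t)⁻¹) U)
    (hg : IntegrableOn (fun x => (t - x) * g x ^ 2) (Set.Iio t))
    (hc : ∀ᵐ x, x ∈ U → (t - x) * g x = c) : ∀ᵐ x, x ∈ U → g x = 0 := by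
  have hc0 : c = 0 := by
    by_contra hne
    refine hn ?_
    have h1 := (hg.mono_set hUt).const_mul (-(c ^ 2)⁻¹)
    refine IntegrableOn.congr_fun_ae h1 ((ae_restrict_iff' hUm).2 ?_)
    filter_upwards [hc] with x hx hxU
    have hxt : t - x ≠ 0 := (sub_pos.2 (hUt hxU)).ne'
    have hxt' : x - t ≠ 0 := (sub_neg.2 (hUt hxU)).ne
    have hgx : g x = c / (t - x) := by
      rw [eq_div_iff hxt, mul_comm]
      exact hx hxU
    rw [hgx, ← neg_sub t x, inv_neg]
    field_simp
  filter_upwards [hc] with x hx hxU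
  have h1 := hx hxU
  rw [hc0] at h1
  exact (mul_eq_zero.1 h1).resolve_left (sub_pos.2 (hUt hxU)).ne'

/-- Local integrability comes from `|(t - x) g| ≤ (t - x) + (t - x) g²`. -/
lemma locallyIntegrableOn_sub_mul {t : ℝ} {g : ℝ → ℝ}
    (hgmeas : AEMeasurable g (volume.restrict (Set.Iio t)))
    (hg : IntegrableOn (fun x => (t - x) * g x ^ 2) (Set.Iio t)) :
    LocallyIntegrableOn (fun x => (t - x) * g x) (Set.Iio t) := by
  refine (locallyIntegrableOn_iff isOpen_Iio.isLocallyClosed).2 fun K hK hKc => ?_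
  have h1 : IntegrableOn (fun x : ℝ => t - x) K :=
    (continuous_const.sub continuous_id).continuousOn.integrableOn_compact hKc
  refine (h1.add (hg.mono_set hK)).mono' ?_ ?_
  · exact ((by fun_prop : Measurable fun x : ℝ => t - x).aemeasurable.mul
      (hgmeas.mono_measure (Measure.restrict_mono hK le_rfl))).aestronglyMeasurable
  · refine (ae_restrict_iff' hKc.measurableSet).2 (Filter.Eventually.of_forall fun x hx => ?_)
    have hxt : 0 < t - x := sub_pos.2 (hK hx)
    have h2 : |g x| ≤ 1 + g x ^ 2 := by
      rw [← sq_abs]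
      nlinarith [sq_nonneg (|g x| - 1), sq_nonneg (g x)]
    simp only [Real.norm_eq_abs, Pi.add_apply, abs_mul, abs_of_pos hxt]
    nlinarith

/-- Weighted `L²` density lemma: let `s < t`, and let `g ∈ L²((−∞,t), (t−x)dx)`. If
`∫_{−∞}^t (t−x) f'(x) g(x) dx = 0` for every smooth compactly supported `f` with
`supp f ⊆ (−∞,t) \ {s}`, then `g = 0` almost everywhere on `(−∞,t)`. Equivalently, the
derivatives of such test functions span a dense subspace of `L²((−∞,t), (t−x)dx)`. -/
theorem weighted_L2_density_of_test_derivatives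
    (s t : ℝ) (hst : s < t) (g : ℝ → ℝ)
    (hgmeas : AEMeasurable g (volume.restrict (Set.Iio t)))
    (hgL2 : IntegrableOn (fun x => (t - x) * g x ^ 2) (Set.Iio t))
    (horth : ∀ f : ℝ → ℝ, ContDiff ℝ (⊤ : ℕ∞) f → HasCompactSupport f →
      tsupport f ⊆ Set.Iio t \ {s} →
      ∫ x in Set.Iio t, (t - x) * deriv f x * g x = 0) :
    ∀ᵐ x ∂(volume.restrict (Set.Iio t)), g x = 0 := by
  have hloc := locallyIntegrableOn_sub_mul hgmeas hgL2
  have main : ∀ U : Set ℝ, IsOpen U → U.OrdConnected → U.Nonempty → U ⊆ Set.Iio t \ {s} →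
      ¬ IntegrableOn (fun x => (x - t)⁻¹) U → ∀ᵐ x, x ∈ U → g x = 0 := by
    intro U hUo hU hne hsub hn
    have hUt : U ⊆ Set.Iio t := hsub.trans Set.sdiff_subset
    obtain ⟨c, hc⟩ := exists_ae_eq_const_of_integral_mul_deriv_eq_zero hUo hU hne
      (hloc.mono_set hUt) fun f hf hfc hfs => by
        rw [← horth f hf hfc (hfs.trans hsub), setIntegral_eq_integral_of_forall_compl_eq_zero]
        · congr 1
          ext x
          ring
        · intro x hx
          have hx' : x ∉ tsupport (deriv f) := fun h =>
            hx (hUt (hfs (closure_minimal support_deriv_subset (isClosed_tsupport f) h)))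
          rw [image_eq_zero_of_notMem_tsupport hx', mul_zero, zero_mul]
    exact ae_eq_zero_of_mul_ae_eq_const hUo.measurableSet hUt hn hgL2 hc
  have hL := main (Set.Iio s) isOpen_Iio Set.ordConnected_Iio Set.nonempty_Iio
    (fun x hx => ⟨lt_trans hx hst, fun h => (ne_of_lt hx) h⟩) (not_integrableOn_Iio_sub_inv s t)
  have hR := main (Set.Ioo s t) isOpen_Ioo Set.ordConnected_Ioo (Set.nonempty_Ioo.2 hst)
    (fun x hx => ⟨hx.2, fun h => (ne_of_gt hx.1) h⟩) (not_integrableOn_Ioo_sub_inv hst)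
  have hs : ∀ᵐ x : ℝ, x ≠ s := compl_mem_ae_iff.2 (measure_singleton s)
  refine (ae_restrict_iff' measurableSet_Iio).2 ?_
  filter_upwards [hL, hR, hs] with x h1 h2 h3 hxt
  rcases lt_or_gt_of_ne h3 with h | h
  · exact h1 h
  · exact h2 ⟨h, hxt⟩
end
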